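/- Let Z, B, h, σ² > 0 be positive reals and define the uplink transmission energy E(P) = P · Z / (B · log₂(1 + P·h/σ²)) for P > 0. Then E is strictly increasing on (0, ∞); that is, for all 0 < P₁ < P₂, E(P₁) < E(P₂). -/

import Mathlib

/-! Since `log` is strictly concave, the secant slope `log (1 + x) / x` from `1` is strictly
decreasing in `x > 0`. With `x = P * h / σ2`, the energy is a positive constant times the
reciprocal of this slope, hence strictly increasing in `P`. -/

open Real

/-- The uplink transmission energy
`E(P) = P * Z / (B * log₂(1 + P*h/σ²))` is strictly increasing on `(0, ∞)`. -/
theorem uplink_energy_strictMono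
    (Z B h σ2 : ℝ) (hZ : 0 < Z) (hB : 0 < B) (hh : 0 < h) (hσ : 0 < σ2) :
    ∀ P₁ P₂ : ℝ, 0 < P₁ → P₁ < P₂ →
      P₁ * Z / (B * Real.logb 2 (1 + P₁ * h / σ2)) <
        P₂ * Z / (B * Real.logb 2 (1 + P₂ * h / σ2)) := by
  intro P₁ P₂ h₁ h₁₂
  have h₂ : 0 < P₂ := h₁.trans h₁₂
  have hx₁ : 0 < P₁ * h / σ2 := by positivity
  have hx₂ : 0 < P₂ * h / σ2 := by positivity
  have hx : P₁ * h / σ2 < P₂ * h / σ2 := by gcongr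
  have hslope := strictConcaveOn_log_Ioi.secant_strict_mono
    (a := 1) (x := 1 + P₁ * h / σ2) (y := 1 + P₂ * h / σ2)
    (Set.mem_Ioi.2 one_pos) (Set.mem_Ioi.2 (by linarith)) (Set.mem_Ioi.2 (by linarith))
    (by linarith) (by linarith) (by linarith)
  have hl₁ : 0 < Real.log (1 + P₁ * h / σ2) := Real.log_pos (by linarith)
  have hl₂ : 0 < Real.log (1 + P₂ * h / σ2) := Real.log_pos (by linarith)
  have h2 : 0 < Real.log 2 := Real.log_pos one_lt_two
  rw [Real.log_one, sub_zero, sub_zero, add_sub_cancel_left, add_sub_cancel_left,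
    div_lt_div_iff₀ hx₂ hx₁] at hslope
  unfold Real.logb
  rw [div_lt_div_iff₀ (by positivity) (by positivity)]
  generalize Real.log (1 + P₁ * h / σ2) = L₁ at *
  generalize Real.log (1 + P₂ * h / σ2) = L₂ at *
  have key := mul_lt_mul_of_pos_left hslope
    (show 0 < σ2 / h * (Z * B / Real.log 2) by positivity)
  convert key using 1 <;> field_simp
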